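/- arXiv:2603.07617 — 4 statements merged into one kernel-verified Lean document; each statement's English description precedes it below -/
import Mathlib

section
/- Let Ω′ ⊂ ℝ^N be a bounded open set, let a, b : Ω′ → ℝ with a(x) > 0 for all x ∈ Ω′, let h : [0,∞) → ℝ, and let u, w be twice differentiable on Ω′ and continuous on the closure of Ω′. If −Δu(x) + b(x)·h(|∇u(x)|) + a(x)·u(x) ≤ −Δw(x) + b(x)·h(|∇w(x)|) + a(x)·w(x) for all x ∈ Ω′, and u ≤ w on the boundary ∂Ω′, then u ≤ w throughout Ω′. -/
open Set

/-- The Laplacian of `f : ℝ^N → ℝ`, as the sum of the pure second derivatives in the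
coordinate directions. -/
noncomputable def laplacian {N : ℕ} (f : EuclideanSpace ℝ (Fin N) → ℝ)
    (x : EuclideanSpace ℝ (Fin N)) : ℝ :=
  ∑ i : Fin N, fderiv ℝ (fun y => fderiv ℝ f y (EuclideanSpace.single i 1)) x
    (EuclideanSpace.single i 1)

open Filter Topology

theorem IsLocalMax.deriv_deriv_nonpos {g : ℝ → ℝ} {t : ℝ} (hg : IsLocalMax g t)
    (hc : ContinuousAt g t) : deriv (deriv g) t ≤ 0 := by
  by_contra! hpos
  have hmin : IsLocalMin g t := isLocalMin_of_deriv_deriv_pos hpos hg.deriv_eq_zero hc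
  have hconst : g =ᶠ[𝓝 t] fun _ => g t := by
    filter_upwards [hg, hmin] with s h₁ h₂ using le_antisymm h₁ h₂
  have hzero : deriv (deriv g) t = 0 := by
    rw [hconst.deriv.deriv_eq]
    simp
  exact hpos.ne' hzero

section

variable {E : Type*} [NormedAddCommGroup E] [NormedSpace ℝ E] {f g : E → ℝ} {x : E}

theorem ContDiffAt.differentiableAt_fderiv_apply (hf : ContDiffAt ℝ 2 f x) (e : E) :
    DifferentiableAt ℝ (fun y => fderiv ℝ f y e) x :=
  ((hf.fderiv_right (m := 1) (by norm_num)).differentiableAt (by norm_num)).clm_apply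
    (differentiableAt_const e)

theorem ContDiffAt.eventually_differentiableAt (hf : ContDiffAt ℝ 2 f x) :
    ∀ᶠ y in 𝓝 x, DifferentiableAt ℝ f y := by
  filter_upwards [hf.eventually (by simp)] with y hy using hy.differentiableAt (by norm_num)

theorem IsLocalMax.fderiv_fderiv_apply_nonpos (hmax : IsLocalMax f x)
    (hf : ContDiffAt ℝ 2 f x) (e : E) :
    fderiv ℝ (fun y => fderiv ℝ f y e) x e ≤ 0 := by
  let γ : ℝ → E := fun t => x + t • e
  have hγ : ∀ t, HasDerivAt γ e t := fun t => by
    simpa only [id, one_smul] using ((hasDerivAt_id t).smul_const e).const_add x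
  have hγ₀ : γ 0 = x := by simp [γ]
  have hγt : Tendsto γ (𝓝 0) (𝓝 x) := by
    simpa only [hγ₀] using (hγ 0).continuousAt.tendsto
  have hderiv : deriv (f ∘ γ) =ᶠ[𝓝 0] (fun y => fderiv ℝ f y e) ∘ γ := by
    filter_upwards [hγt.eventually hf.eventually_differentiableAt] with t ht
    exact (ht.hasFDerivAt.comp_hasDerivAt t (hγ t)).deriv
  have hderiv₂ : deriv (deriv (f ∘ γ)) 0 = fderiv ℝ (fun y => fderiv ℝ f y e) x e := by
    rw [hderiv.deriv_eq]
    have hd := (hf.differentiableAt_fderiv_apply e).hasFDerivAt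
    rw [← hγ₀] at hd
    simpa only [hγ₀] using (hd.comp_hasDerivAt 0 (hγ 0)).deriv
  have hmaxγ : IsLocalMax (f ∘ γ) 0 := by
    filter_upwards [hγt.eventually hmax] with t ht
    simpa only [Function.comp_apply, hγ₀] using ht
  have hcont : ContinuousAt (f ∘ γ) 0 :=
    ContinuousAt.comp (by simpa only [hγ₀] using hf.continuousAt) (hγ 0).continuousAt
  exact hderiv₂ ▸ hmaxγ.deriv_deriv_nonpos hcont

theorem ContDiffAt.fderiv_fderiv_apply_sub (hf : ContDiffAt ℝ 2 f x)
    (hg : ContDiffAt ℝ 2 g x) (e : E) :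
    fderiv ℝ (fun y => fderiv ℝ (f - g) y e) x e =
      fderiv ℝ (fun y => fderiv ℝ f y e) x e - fderiv ℝ (fun y => fderiv ℝ g y e) x e := by
  have heq : (fun y => fderiv ℝ (f - g) y e) =ᶠ[𝓝 x]
      (fun y => fderiv ℝ f y e) - fun y => fderiv ℝ g y e := by
    filter_upwards [hf.eventually_differentiableAt, hg.eventually_differentiableAt]
      with y hfy hgy
    simp [fderiv_sub hfy hgy]
  rw [heq.fderiv_eq, fderiv_sub (hf.differentiableAt_fderiv_apply e)
    (hg.differentiableAt_fderiv_apply e), sub_apply]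

end

/-- At a local maximum of `u - w`, the Laplacian of `u` is at most that of `w`. -/
theorem IsLocalMax.laplacian_le {N : ℕ} {u w : EuclideanSpace ℝ (Fin N) → ℝ}
    {x : EuclideanSpace ℝ (Fin N)} (hmax : IsLocalMax (u - w) x)
    (hu : ContDiffAt ℝ 2 u x) (hw : ContDiffAt ℝ 2 w x) :
    laplacian u x ≤ laplacian w x := by
  refine Finset.sum_le_sum fun i _ => ?_
  have hnonpos := hmax.fderiv_fderiv_apply_nonpos (hu.sub hw) (EuclideanSpace.single i 1)
  rw [hu.fderiv_fderiv_apply_sub hw] at hnonpos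
  exact sub_nonpos.mp hnonpos

/-- At a local maximum of `u - w`, the gradients of `u` and `w` coincide. -/
theorem IsLocalMax.gradient_eq {F : Type*} [NormedAddCommGroup F] [InnerProductSpace ℝ F]
    [CompleteSpace F] {u w : F → ℝ} {x : F} (hmax : IsLocalMax (u - w) x)
    (hu : DifferentiableAt ℝ u x) (hw : DifferentiableAt ℝ w x) :
    gradient u x = gradient w x := by
  have hzero := hmax.fderiv_eq_zero
  rw [fderiv_sub hu hw, sub_eq_zero] at hzero
  rw [gradient, gradient, hzero]

/-- comparison principle. Let `Ω′ ⊂ ℝ^N` be bounded open, `a > 0` on `Ω′`,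
`h : [0,∞) → ℝ`, and `u, w` twice differentiable on `Ω′` and continuous on its closure.
If `−Δu + b·h(|∇u|) + a·u ≤ −Δw + b·h(|∇w|) + a·w` in `Ω′` and `u ≤ w` on `∂Ω′`,
then `u ≤ w` in `Ω′`. -/
theorem comparison_principle {N : ℕ} (hN : 1 ≤ N)
    (Ω' : Set (EuclideanSpace ℝ (Fin N))) (hΩ'bdd : Bornology.IsBounded Ω')
    (hΩ'open : IsOpen Ω')
    (a b : EuclideanSpace ℝ (Fin N) → ℝ) (ha : ∀ x ∈ Ω', 0 < a x)
    (h : ℝ → ℝ) (u w : EuclideanSpace ℝ (Fin N) → ℝ)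
    (hu : ContDiffOn ℝ 2 u Ω') (hw : ContDiffOn ℝ 2 w Ω')
    (huc : ContinuousOn u (closure Ω')) (hwc : ContinuousOn w (closure Ω'))
    (hcomp : ∀ x ∈ Ω',
      -laplacian u x + b x * h ‖gradient u x‖ + a x * u x ≤
      -laplacian w x + b x * h ‖gradient w x‖ + a x * w x)
    (hbdy : ∀ x ∈ frontier Ω', u x ≤ w x) :
    ∀ x ∈ Ω', u x ≤ w x := by
  intro x hx
  obtain ⟨y, hy, hymax⟩ := hΩ'bdd.isCompact_closure.exists_isMaxOn
    ⟨x, subset_closure hx⟩ (huc.sub hwc)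
  have hle : u x - w x ≤ u y - w y := hymax (subset_closure hx)
  by_contra! hlt
  have hyΩ : y ∈ Ω' := by
    by_contra hyΩ
    have hyle := hbdy y (hΩ'open.frontier_eq ▸ ⟨hy, hyΩ⟩)
    linarith
  have hΩy : Ω' ∈ 𝓝 y := hΩ'open.mem_nhds hyΩ
  have huy := hu.contDiffAt hΩy
  have hwy := hw.contDiffAt hΩy
  have hmax : IsLocalMax (u - w) y :=
    hymax.isLocalMax (mem_of_superset hΩy subset_closure)
  have hgrad := hmax.gradient_eq (huy.differentiableAt (by norm_num))
    (hwy.differentiableAt (by norm_num))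
  have hlap := hmax.laplacian_le huy hwy
  have hineq := hcomp y hyΩ
  rw [hgrad] at hineq
  have hprod : 0 < a y * (u y - w y) := mul_pos (ha y hyΩ) (by linarith)
  linarith
end

section
/- Let N ≥ 1, let Ω ⊂ ℝ^N be open, δ₀ > 0, and let v : Ω → ℝ be positive and twice continuously differentiable on S = {x ∈ Ω : 0 < v(x) < δ₀}, with |∇v(x)| = 1 and |Δv(x)| ≤ M on S for some M ≥ 0. Let q > 1, β ≥ 0 with q < β + 2, and set γ = (β − q + 2)/(q − 1). Assume h : [0,∞) → [0,∞) satisfies h(s) ≥ l₁·s^q for all s ≥ 0 with l₁ > 0; that b(x) ≥ b₁·v(x)^β on S with b₁ > 0; that a(x) ≥ 0 on S; and that f(x) ≤ F₀ on S for some constant F₀. Then for every constant C > (γ(γ+1)/(b₁·l₁·γ^q))^{1/(q−1)} there exists δ ∈ (0, δ₀] such that the function W(x) = C·v(x)^{−γ} satisfies −ΔW(x) + b(x)·h(|∇W(x)|) + a(x)·W(x) − f(x) ≥ 0 for every x ∈ Ω with 0 < v(x) < δ. -/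
open Set

open Filter Topology

/-- The squared norm of the gradient is the sum of the squares of the partial derivatives. -/
theorem norm_gradient_sq_eq_sum {N : ℕ} (v : EuclideanSpace ℝ (Fin N) → ℝ)
    (x : EuclideanSpace ℝ (Fin N)) :
    ‖gradient v x‖ ^ 2 = ∑ i : Fin N, (fderiv ℝ v x (EuclideanSpace.single i 1)) ^ 2 := by
  rw [EuclideanSpace.norm_sq_eq]
  refine Finset.sum_congr rfl fun i _ => ?_
  rw [← inner_gradient_left, EuclideanSpace.inner_single_right]
  simp

/-- Chain rule for the norm of the gradient of `φ ∘ v`. -/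
theorem norm_gradient_comp {E : Type*} [NormedAddCommGroup E] [InnerProductSpace ℝ E]
    [CompleteSpace E] {v : E → ℝ} {x : E} {φ : ℝ → ℝ} {dφ : ℝ}
    (hv : DifferentiableAt ℝ v x) (hφ : HasDerivAt φ dφ (v x)) :
    ‖gradient (fun y => φ (v y)) x‖ = |dφ| * ‖gradient v x‖ := by
  have hd : fderiv ℝ (fun y => φ (v y)) x = dφ • fderiv ℝ v x :=
    (hφ.comp_hasFDerivAt x hv.hasFDerivAt).fderiv
  simp only [gradient, LinearIsometryEquiv.norm_map]
  rw [hd, norm_smul, Real.norm_eq_abs]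

/-- Chain rule for the Laplacian: `Δ(φ ∘ v) = ddφ(v) |∇v|² + dφ(v) Δv`, where `dφ` and `ddφ` are
the first and second derivatives of `φ`. -/
theorem laplacian_comp {N : ℕ} {v : EuclideanSpace ℝ (Fin N) → ℝ}
    {x : EuclideanSpace ℝ (Fin N)} {φ dφ : ℝ → ℝ} {ddφ : ℝ} (hv : ContDiffAt ℝ 2 v x)
    (hφ : ∀ᶠ t in 𝓝 (v x), HasDerivAt φ (dφ t) t) (hdφ : HasDerivAt dφ ddφ (v x)) :
    laplacian (fun y => φ (v y)) x
      = ddφ * ‖gradient v x‖ ^ 2 + dφ (v x) * laplacian v x := by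
  have hdiff : ∀ᶠ y in 𝓝 x, DifferentiableAt ℝ v y :=
    (hv.eventually (by simp)).mono fun y hy => hy.differentiableAt (by simp)
  have hvx : HasFDerivAt v (fderiv ℝ v x) x := hdiff.self_of_nhds.hasFDerivAt
  have hφv : ∀ᶠ y in 𝓝 x, HasDerivAt φ (dφ (v y)) (v y) := hvx.continuousAt.eventually hφ
  have hfd : DifferentiableAt ℝ (fderiv ℝ v) x :=
    (hv.fderiv_right (m := 1) (by norm_num)).differentiableAt (by simp)
  rw [norm_gradient_sq_eq_sum, laplacian, laplacian, Finset.mul_sum, Finset.mul_sum,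
    ← Finset.sum_add_distrib]
  refine Finset.sum_congr rfl fun i _ => ?_
  set e : EuclideanSpace ℝ (Fin N) := EuclideanSpace.single i 1
  have heq : (fun y => fderiv ℝ (fun z => φ (v z)) y e)
      =ᶠ[𝓝 x] fun y => dφ (v y) * fderiv ℝ v y e := by
    filter_upwards [hdiff, hφv] with y hy hφy
    have hd : fderiv ℝ (fun z => φ (v z)) y = dφ (v y) • fderiv ℝ v y :=
      (hφy.comp_hasFDerivAt y hy.hasFDerivAt).fderiv
    simp [hd]
  have hpartial : DifferentiableAt ℝ (fun y => fderiv ℝ v y e) x :=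
    hfd.clm_apply (differentiableAt_const e)
  have hmul : fderiv ℝ (fun y => dφ (v y) * fderiv ℝ v y e) x = _ :=
    ((hdφ.comp_hasFDerivAt x hvx).mul hpartial.hasFDerivAt).fderiv
  rw [heq.fderiv_eq, hmul]
  simp only [Function.comp_apply, add_apply, smul_apply, smul_eq_mul]
  ring

/-- A function whose gradient does not vanish on its collar `{x ∈ Ω | 0 < v x < δ₀}` is continuous
there, so that the collar is open. -/
theorem collar_mem_nhds {E : Type*} [NormedAddCommGroup E] [InnerProductSpace ℝ E]
    [CompleteSpace E] {Ω : Set E} (hΩ : IsOpen Ω) {v : E → ℝ} {δ₀ : ℝ} {x : E}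
    (hx : x ∈ {x ∈ Ω | 0 < v x ∧ v x < δ₀}) (hgrad : gradient v x ≠ 0) :
    {x ∈ Ω | 0 < v x ∧ v x < δ₀} ∈ 𝓝 x := by
  have hd : DifferentiableAt ℝ v x :=
    not_imp_comm.1 gradient_eq_zero_of_not_differentiableAt hgrad
  filter_upwards [hΩ.mem_nhds hx.1, hd.continuousAt.eventually (lt_mem_nhds hx.2.1),
    hd.continuousAt.eventually (gt_mem_nhds hx.2.2)] with y h₁ h₂ h₃
  exact ⟨h₁, h₂, h₃⟩

/-- Derivative of the power profile `t ↦ C t ^ p`. -/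
theorem hasDerivAt_const_mul_rpow (C p : ℝ) {t : ℝ} (ht : 0 < t) :
    HasDerivAt (fun s : ℝ => C * s ^ p) (C * p * t ^ (p - 1)) t := by
  simpa [mul_assoc] using (Real.hasDerivAt_rpow_const (p := p) (Or.inl ht.ne')).const_mul C

/-- Above the critical constant, the gradient term beats the leading part of the Laplacian. -/
theorem lt_of_critical_constant_lt {γ q c C : ℝ} (hγ : 0 < γ) (hq : 1 < q) (hc : 0 < c)
    (hC : (γ * (γ + 1) / (c * γ ^ q)) ^ (1 / (q - 1)) < C) :
    C * γ * (γ + 1) < c * (C * γ) ^ q := by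
  have hK : 0 < γ * (γ + 1) / (c * γ ^ q) := by positivity
  have hC0 : 0 < C := lt_trans (by positivity) hC
  have hlt : γ * (γ + 1) / (c * γ ^ q) < C ^ (q - 1) := by
    have := Real.rpow_lt_rpow (by positivity) hC (sub_pos.2 hq)
    rwa [← Real.rpow_mul hK.le, one_div_mul_cancel (sub_pos.2 hq).ne', Real.rpow_one] at this
  rw [div_lt_iff₀ (by positivity)] at hlt
  rw [Real.mul_rpow hC0.le hγ.le]
  have hCq : C ^ q = C * C ^ (q - 1) := by
    rw [← Real.rpow_one_add' hC0.le (by linarith)]; congr 1; ring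
  rw [hCq]
  nlinarith [mul_lt_mul_of_pos_left hlt hC0]

/-- A positive constant dominates lower order terms near zero. -/
theorem exists_forall_lower_order_nonneg {A δ₀ p : ℝ} (hA : 0 < A) (hδ₀ : 0 < δ₀) (hp : 0 < p)
    (B F : ℝ) : ∃ δ : ℝ, 0 < δ ∧ δ ≤ δ₀ ∧ ∀ t, 0 < t → t < δ → 0 ≤ A - B * t - F * t ^ p := by
  have hcont : ContinuousAt (fun t : ℝ => A - B * t - F * t ^ p) 0 := by
    have := Real.continuousAt_rpow_const 0 p (Or.inr hp.le)
    fun_prop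
  have hpos : (0 : ℝ) < A - B * 0 - F * 0 ^ p := by simpa [Real.zero_rpow hp.ne'] using hA
  obtain ⟨ε, hε, h⟩ := Metric.eventually_nhds_iff.1 (hcont.eventually (lt_mem_nhds hpos))
  refine ⟨min ε δ₀, lt_min hε hδ₀, min_le_right _ _, fun t ht htδ => (h ?_).le⟩
  rw [Real.dist_eq, sub_zero, abs_of_pos ht]
  exact htδ.trans_le (min_le_left _ _)

/-- supersolution barrier in the gradient-dominant regime `q < β + 2`.
With `γ = (β − q + 2)/(q − 1)`, `h(s) ≥ l₁·s^q`, `b ≥ b₁·v^β`, `a ≥ 0`, `f ≤ F₀` on the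
collar `S = {x ∈ Ω : 0 < v(x) < δ₀}` where `|∇v| = 1` and `|Δv| ≤ M`, for every
`C > (γ(γ+1)/(b₁·l₁·γ^q))^{1/(q−1)}` the function `W = C·v^{−γ}` satisfies
`−ΔW + b·h(|∇W|) + a·W − f ≥ 0` on `{0 < v < δ}` for some `δ ∈ (0, δ₀]`. -/
theorem supersolution_barrier_gradient_dominant {N : ℕ} (hN : 1 ≤ N)
    (Ω : Set (EuclideanSpace ℝ (Fin N))) (hΩ : IsOpen Ω)
    (δ₀ : ℝ) (hδ₀ : 0 < δ₀)
    (v : EuclideanSpace ℝ (Fin N) → ℝ) (M : ℝ) (hM : 0 ≤ M)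
    (hv : ContDiffOn ℝ 2 v {x ∈ Ω | 0 < v x ∧ v x < δ₀})
    (hgrad : ∀ x ∈ {x ∈ Ω | 0 < v x ∧ v x < δ₀}, ‖gradient v x‖ = 1)
    (hlap : ∀ x ∈ {x ∈ Ω | 0 < v x ∧ v x < δ₀}, |laplacian v x| ≤ M)
    (q β : ℝ) (hq : 1 < q) (hβ : 0 ≤ β) (hqβ : q < β + 2)
    (γ : ℝ) (hγ : γ = (β - q + 2) / (q - 1))
    (h : ℝ → ℝ) (l₁ : ℝ) (hl₁ : 0 < l₁)
    (hhnn : ∀ s : ℝ, 0 ≤ s → 0 ≤ h s)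
    (hh : ∀ s : ℝ, 0 ≤ s → l₁ * s ^ q ≤ h s)
    (a b f : EuclideanSpace ℝ (Fin N) → ℝ) (b₁ : ℝ) (hb₁ : 0 < b₁)
    (hbv : ∀ x ∈ {x ∈ Ω | 0 < v x ∧ v x < δ₀}, b₁ * v x ^ β ≤ b x)
    (ha : ∀ x ∈ {x ∈ Ω | 0 < v x ∧ v x < δ₀}, 0 ≤ a x)
    (F₀ : ℝ) (hf : ∀ x ∈ {x ∈ Ω | 0 < v x ∧ v x < δ₀}, f x ≤ F₀)
    (C : ℝ) (hC : (γ * (γ + 1) / (b₁ * l₁ * γ ^ q)) ^ (1 / (q - 1)) < C) :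
    ∃ δ : ℝ, 0 < δ ∧ δ ≤ δ₀ ∧ ∀ x ∈ Ω, 0 < v x → v x < δ →
      0 ≤ -laplacian (fun y => C * v y ^ (-γ)) x
          + b x * h ‖gradient (fun y => C * v y ^ (-γ)) x‖
          + a x * (C * v x ^ (-γ)) - f x := by
  have hq1 : 0 < q - 1 := sub_pos.2 hq
  have hγ0 : 0 < γ := hγ ▸ div_pos (by linarith) hq1
  have hγq : γ * (q - 1) = β - q + 2 := by rw [hγ, div_mul_cancel₀ _ hq1.ne']
  have hC0 : 0 < C := lt_of_le_of_lt (by positivity) hC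
  have hA := sub_pos.2 (lt_of_critical_constant_lt hγ0 hq (mul_pos hb₁ hl₁) hC)
  obtain ⟨δ, hδ, hδδ₀, hδt⟩ :=
    exists_forall_lower_order_nonneg hA hδ₀ (by linarith : 0 < γ + 2) (C * γ * M) F₀
  refine ⟨δ, hδ, hδδ₀, fun x hxΩ hx0 hxδ => ?_⟩
  have hxS : x ∈ {x ∈ Ω | 0 < v x ∧ v x < δ₀} := ⟨hxΩ, hx0, hxδ.trans_le hδδ₀⟩
  have hg := hgrad x hxS
  have hvx : ContDiffAt ℝ 2 v x :=
    hv.contDiffAt (collar_mem_nhds hΩ hxS (norm_ne_zero_iff.1 (by simp [hg])))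
  have hW : laplacian (fun y => C * v y ^ (-γ)) x = _ :=
    laplacian_comp (φ := fun t => C * t ^ (-γ)) hvx
      ((lt_mem_nhds hx0).mono fun t ht => hasDerivAt_const_mul_rpow C (-γ) ht)
      (hasDerivAt_const_mul_rpow (C * -γ) (-γ - 1) hx0)
  have hG : ‖gradient (fun y => C * v y ^ (-γ)) x‖ = _ :=
    norm_gradient_comp (φ := fun t => C * t ^ (-γ)) (hvx.differentiableAt (by simp))
      (hasDerivAt_const_mul_rpow C (-γ) hx0)
  have hbx := hbv x hxS
  have hax := mul_nonneg (ha x hxS) (by positivity : 0 ≤ C * v x ^ (-γ))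
  have hfx := hf x hxS
  have hlx := (abs_le.1 (hlap x hxS)).1
  have hkey := hδt (v x) hx0 hxδ
  generalize v x = t at *
  have hGrad : ‖gradient (fun y => C * v y ^ (-γ)) x‖ = C * γ * t ^ (-γ - 1) := by
    rw [hG, hg, mul_one, mul_neg, neg_mul, abs_neg, abs_of_nonneg (by positivity)]
  rw [hW, hGrad, hg, show -γ - 1 - 1 = -γ - 2 by ring]
  have hpow : t ^ β * (t ^ (-γ - 1)) ^ q = t ^ (-γ - 2) := by
    rw [← Real.rpow_mul hx0.le, ← Real.rpow_add hx0]
    congr 1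
    linarith
  have hgradterm : b₁ * l₁ * (C * γ) ^ q * t ^ (-γ - 2) ≤ b x * h (C * γ * t ^ (-γ - 1)) := by
    have hs : 0 ≤ C * γ * t ^ (-γ - 1) := by positivity
    calc b₁ * l₁ * (C * γ) ^ q * t ^ (-γ - 2)
        = b₁ * t ^ β * (l₁ * (C * γ * t ^ (-γ - 1)) ^ q) := by
          rw [Real.mul_rpow (mul_pos hC0 hγ0).le (Real.rpow_nonneg hx0.le _), ← hpow]; ring
      _ ≤ b x * h (C * γ * t ^ (-γ - 1)) :=
          mul_le_mul hbx (hh _ hs) (by positivity) (le_trans (by positivity) hbx)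
  have hone : t ^ (-γ - 1) = t ^ (-γ - 2) * t := by
    rw [← Real.rpow_add_one hx0.ne']; congr 1; ring
  have hinv : t ^ (-γ - 2) * t ^ (γ + 2) = 1 := by
    rw [← Real.rpow_add hx0, show -γ - 2 + (γ + 2) = 0 by ring, Real.rpow_zero]
  have hscaled := mul_nonneg (Real.rpow_nonneg hx0.le (-γ - 2)) hkey
  have hlapterm : 0 ≤ C * γ * t ^ (-γ - 1) * (laplacian v x + M) :=
    mul_nonneg (by positivity) (by linarith)
  have hmain : 0 ≤ b₁ * l₁ * (C * γ) ^ q * t ^ (-γ - 2) - C * γ * (γ + 1) * t ^ (-γ - 2)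
      - C * γ * M * t ^ (-γ - 1) - F₀ := by
    refine hscaled.trans_eq ?_
    rw [hone]
    linear_combination -F₀ * hinv
  linarith
end

section
/- Let N ≥ 1, let Ω ⊂ ℝ^N be open, δ₀ > 0, and let v : Ω → ℝ be positive and twice continuously differentiable on S = {x ∈ Ω : 0 < v(x) < δ₀}, with |∇v(x)| = 1 and |Δv(x)| ≤ M on S for some M ≥ 0. Let q > 1 and β ≥ 0 with q > β + 2 (the high-order gradient regime). Assume h : [0,∞) → [0,∞) satisfies h(s) ≥ l₁·s^q for all s ≥ 0 with l₁ > 0; that b(x) ≥ b₁·v(x)^β on S with b₁ > 0; that a(x) ≥ 0 on S; and that f(x) ≤ F₀ on S for some constant F₀. Then for every γ > 0 and every C > 0 there exists δ ∈ (0, δ₀] such that W(x) = C·v(x)^{−γ} satisfies −ΔW(x) + b(x)·h(|∇W(x)|) + a(x)·W(x) − f(x) ≥ 0 for every x ∈ Ω with 0 < v(x) < δ. -/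
open Set

open Filter Topology

/-- The sum of the squared partial derivatives is the squared norm of the gradient. -/
lemma sum_sq_fderiv_single_eq_norm_gradient_sq {N : ℕ} (v : EuclideanSpace ℝ (Fin N) → ℝ)
    (x : EuclideanSpace ℝ (Fin N)) :
    ∑ i : Fin N, (fderiv ℝ v x (EuclideanSpace.single i 1)) ^ 2 = ‖gradient v x‖ ^ 2 := by
  rw [EuclideanSpace.norm_sq_eq]
  refine Finset.sum_congr rfl fun i _ => ?_
  have hi : fderiv ℝ v x (EuclideanSpace.single i 1) = gradient v x i := by
    rw [← InnerProductSpace.toDual_symm_apply, EuclideanSpace.inner_single_right]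
    simp [gradient]
  rw [hi, Real.norm_eq_abs, sq_abs]

/-- The derivative of `C * v ^ r` where `v` is positive. -/
lemma hasFDerivAt_const_mul_rpow {E : Type*} [NormedAddCommGroup E] [NormedSpace ℝ E]
    {v : E → ℝ} {x : E} (hv : DifferentiableAt ℝ v x) (hx : 0 < v x) (C r : ℝ) :
    HasFDerivAt (fun y => C * v y ^ r) ((C * r * v x ^ (r - 1)) • fderiv ℝ v x) x := by
  have h := (hv.hasFDerivAt.rpow_const (p := r) (Or.inl hx.ne')).const_mul C
  rwa [smul_smul, ← mul_assoc] at h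

/-- The gradient of `C * v ^ r` where `v` is positive. -/
lemma gradient_const_mul_rpow {N : ℕ} {v : EuclideanSpace ℝ (Fin N) → ℝ}
    {x : EuclideanSpace ℝ (Fin N)} (hv : DifferentiableAt ℝ v x) (hx : 0 < v x) (C r : ℝ) :
    gradient (fun y => C * v y ^ r) x = (C * r * v x ^ (r - 1)) • gradient v x := by
  simp [gradient, (hasFDerivAt_const_mul_rpow hv hx C r).fderiv]

/-- The Laplacian of `C * v ^ r` where `v` is positive. -/
lemma laplacian_const_mul_rpow {N : ℕ} {v : EuclideanSpace ℝ (Fin N) → ℝ}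
    {x : EuclideanSpace ℝ (Fin N)} (hv : ContDiffAt ℝ 2 v x) (hx : 0 < v x) (C r : ℝ) :
    laplacian (fun y => C * v y ^ r) x =
      C * r * (r - 1) * v x ^ (r - 2) * ‖gradient v x‖ ^ 2
        + C * r * v x ^ (r - 1) * laplacian v x := by
  have hd : DifferentiableAt ℝ v x := hv.differentiableAt (by norm_num)
  have hdd : DifferentiableAt ℝ (fderiv ℝ v) x :=
    (hv.fderiv_right (m := 1) (by norm_num)).differentiableAt (by norm_num)
  have hdiff : ∀ᶠ y in 𝓝 x, DifferentiableAt ℝ v y :=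
    (hv.eventually (by norm_num)).mono fun y hy => hy.differentiableAt (by norm_num)
  have hpos : ∀ᶠ y in 𝓝 x, 0 < v y := hd.continuousAt.eventually (lt_mem_nhds hx)
  have hterm : ∀ e : EuclideanSpace ℝ (Fin N),
      fderiv ℝ (fun y => fderiv ℝ (fun z => C * v z ^ r) y e) x e =
        C * r * (r - 1) * v x ^ (r - 2) * (fderiv ℝ v x e) ^ 2
          + C * r * v x ^ (r - 1) * fderiv ℝ (fun y => fderiv ℝ v y e) x e := by
    intro e
    have heq : (fun y => fderiv ℝ (fun z => C * v z ^ r) y e) =ᶠ[𝓝 x]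
        fun y => (C * r * v y ^ (r - 1)) * fderiv ℝ v y e := by
      filter_upwards [hdiff, hpos] with y hy hy'
      rw [(hasFDerivAt_const_mul_rpow hy hy' C r).fderiv]
      rfl
    have hde : DifferentiableAt ℝ (fun y => fderiv ℝ v y e) x :=
      hdd.clm_apply (differentiableAt_const e)
    have hprod :=
      ((hasFDerivAt_const_mul_rpow hd hx (C * r) (r - 1)).fun_mul hde.hasFDerivAt).fderiv
    rw [heq.fderiv_eq, hprod, show r - 1 - 1 = r - 2 by ring]
    simp only [add_apply, smul_apply, smul_eq_mul]
    ring
  rw [← sum_sq_fderiv_single_eq_norm_gradient_sq, laplacian, laplacian, Finset.mul_sum,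
    Finset.mul_sum, ← Finset.sum_add_distrib]
  exact Finset.sum_congr rfl fun i _ => hterm _

/-- Near `0⁺` the power `t ^ (-p)` dominates `t ^ (-r)`, `t ^ (1 - r)` and constants
when `0 < r < p`. -/
lemma eventually_add_le_mul_rpow_neg {p r K : ℝ} (hr : 0 < r) (hrp : r < p) (hK : 0 < K)
    (A B F : ℝ) :
    ∀ᶠ t in 𝓝[>] (0 : ℝ), A * t ^ (-r) + B * t ^ (1 - r) + F ≤ K * t ^ (-p) := by
  have hid : Tendsto (fun t : ℝ => t) (𝓝[>] 0) (𝓝 0) :=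
    tendsto_nhdsWithin_of_tendsto_nhds tendsto_id
  have hpow : ∀ s : ℝ, 0 < s → Tendsto (fun t : ℝ => t ^ s) (𝓝[>] 0) (𝓝 0) := fun s hs => by
    simpa [Real.zero_rpow hs.ne'] using hid.rpow_const (p := s) (Or.inr hs.le)
  have hlim : Tendsto (fun t : ℝ => A * t ^ (p - r) + B * t ^ (1 + (p - r)) + F * t ^ p)
      (𝓝[>] 0) (𝓝 0) := by
    simpa using (((hpow (p - r) (by linarith)).const_mul A).add
      ((hpow (1 + (p - r)) (by linarith)).const_mul B)).add
        ((hpow p (by linarith)).const_mul F)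
  filter_upwards [hlim.eventually (gt_mem_nhds hK), self_mem_nhdsWithin] with t ht ht0
  have ht0 : 0 < t := ht0
  have hmul := mul_le_mul_of_nonneg_right ht.le (Real.rpow_nonneg ht0.le (-p))
  have e₁ : t ^ (p - r) * t ^ (-p) = t ^ (-r) := by
    rw [← Real.rpow_add ht0]; congr 1; ring
  have e₂ : t ^ (1 + (p - r)) * t ^ (-p) = t ^ (1 - r) := by
    rw [← Real.rpow_add ht0]; congr 1; ring
  have e₃ : t ^ p * t ^ (-p) = 1 := by
    rw [← Real.rpow_add ht0]; simp
  rwa [add_mul, add_mul, mul_assoc, mul_assoc, mul_assoc, e₁, e₂, e₃, mul_one] at hmul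

/-- in the high-order gradient regime `q > β + 2`, for every `γ > 0` and
every `C > 0` the function `W = C·v^{−γ}` satisfies `−ΔW + b·h(|∇W|) + a·W − f ≥ 0`
on `{0 < v < δ}` for some `δ ∈ (0, δ₀]`, under `h(s) ≥ l₁·s^q`, `b ≥ b₁·v^β`, `a ≥ 0`,
`f ≤ F₀` on the collar `S = {x ∈ Ω : 0 < v(x) < δ₀}` where `|∇v| = 1`, `|Δv| ≤ M`. -/
theorem supersolution_barrier_high_order {N : ℕ} (hN : 1 ≤ N)
    (Ω : Set (EuclideanSpace ℝ (Fin N))) (hΩ : IsOpen Ω)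
    (δ₀ : ℝ) (hδ₀ : 0 < δ₀)
    (v : EuclideanSpace ℝ (Fin N) → ℝ) (M : ℝ) (hM : 0 ≤ M)
    (hv : ContDiffOn ℝ 2 v {x ∈ Ω | 0 < v x ∧ v x < δ₀})
    (hgrad : ∀ x ∈ {x ∈ Ω | 0 < v x ∧ v x < δ₀}, ‖gradient v x‖ = 1)
    (hlap : ∀ x ∈ {x ∈ Ω | 0 < v x ∧ v x < δ₀}, |laplacian v x| ≤ M)
    (q β : ℝ) (hq : 1 < q) (hβ : 0 ≤ β) (hqβ : β + 2 < q)
    (h : ℝ → ℝ) (l₁ : ℝ) (hl₁ : 0 < l₁)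
    (hhnn : ∀ s : ℝ, 0 ≤ s → 0 ≤ h s)
    (hh : ∀ s : ℝ, 0 ≤ s → l₁ * s ^ q ≤ h s)
    (a b f : EuclideanSpace ℝ (Fin N) → ℝ) (b₁ : ℝ) (hb₁ : 0 < b₁)
    (hbv : ∀ x ∈ {x ∈ Ω | 0 < v x ∧ v x < δ₀}, b₁ * v x ^ β ≤ b x)
    (ha : ∀ x ∈ {x ∈ Ω | 0 < v x ∧ v x < δ₀}, 0 ≤ a x)
    (F₀ : ℝ) (hf : ∀ x ∈ {x ∈ Ω | 0 < v x ∧ v x < δ₀}, f x ≤ F₀) :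
    ∀ γ : ℝ, 0 < γ → ∀ C : ℝ, 0 < C →
      ∃ δ : ℝ, 0 < δ ∧ δ ≤ δ₀ ∧ ∀ x ∈ Ω, 0 < v x → v x < δ →
        0 ≤ -laplacian (fun y => C * v y ^ (-γ)) x
            + b x * h ‖gradient (fun y => C * v y ^ (-γ)) x‖
            + a x * (C * v x ^ (-γ)) - f x := by
  intro γ hγ C hC
  have hCγ : 0 < C * γ := mul_pos hC hγ
  have hexp : γ + 2 < (γ + 1) * q - β := by nlinarith
  obtain ⟨δ₁, hδ₁, hδ⟩ := mem_nhdsGT_iff_exists_Ioo_subset.1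
    (eventually_add_le_mul_rpow_neg (by linarith) hexp
      (show 0 < b₁ * l₁ * (C * γ) ^ q by positivity) (C * γ * (γ + 1)) (C * γ * M) F₀)
  refine ⟨min δ₁ δ₀, lt_min hδ₁ hδ₀, min_le_right _ _, fun x hxΩ hx hxδ => ?_⟩
  have hxS : x ∈ {x ∈ Ω | 0 < v x ∧ v x < δ₀} := ⟨hxΩ, hx, hxδ.trans_le (min_le_right _ _)⟩
  have hmain := hδ ⟨hx, hxδ.trans_le (min_le_left _ _)⟩
  simp only [Set.mem_ofPred_eq] at hmain
  -- The nonvanishing gradient forces differentiability, hence the collar is a neighbourhood.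
  have hd : DifferentiableAt ℝ v x := by
    by_contra hnd
    have := hgrad x hxS
    simp [gradient, fderiv_zero_of_not_differentiableAt hnd] at this
  have hS : {x ∈ Ω | 0 < v x ∧ v x < δ₀} ∈ 𝓝 x :=
    inter_mem (hΩ.mem_nhds hxΩ) (hd.continuousAt (Ioo_mem_nhds hxS.2.1 hxS.2.2))
  rw [laplacian_const_mul_rpow (hv.contDiffAt hS) hx C (-γ),
    gradient_const_mul_rpow hd hx C (-γ), norm_smul, hgrad x hxS, Real.norm_eq_abs]
  have hnorm : |C * -γ * v x ^ (-γ - 1)| = C * γ * v x ^ (-γ - 1) := by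
    rw [mul_neg, neg_mul, abs_neg, abs_of_pos (by positivity)]
  rw [hnorm, mul_one]
  have hbh : b₁ * l₁ * (C * γ) ^ q * v x ^ (-((γ + 1) * q - β)) ≤
      b x * h (C * γ * v x ^ (-γ - 1)) := by
    calc b₁ * l₁ * (C * γ) ^ q * v x ^ (-((γ + 1) * q - β))
        = (b₁ * v x ^ β) * (l₁ * (C * γ * v x ^ (-γ - 1)) ^ q) := by
          rw [Real.mul_rpow hCγ.le (by positivity), ← Real.rpow_mul hx.le,
            show -((γ + 1) * q - β) = β + (-γ - 1) * q by ring, Real.rpow_add hx]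
          ring
      _ ≤ b x * h (C * γ * v x ^ (-γ - 1)) := by
          have hs : 0 ≤ C * γ * v x ^ (-γ - 1) := by positivity
          exact mul_le_mul (hbv x hxS) (hh _ hs) (by positivity)
            ((by positivity : 0 ≤ b₁ * v x ^ β).trans (hbv x hxS))
  have haW : 0 ≤ a x * (C * v x ^ (-γ)) := mul_nonneg (ha x hxS) (by positivity)
  have hlapM : -(C * γ * v x ^ (-γ - 1) * laplacian v x) ≤ C * γ * M * v x ^ (-γ - 1) := by
    have := mul_le_mul_of_nonneg_left (neg_le_of_abs_le (hlap x hxS))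
      (show 0 ≤ C * γ * v x ^ (-γ - 1) by positivity)
    linarith
  rw [show -(γ + 2) = -γ - 2 by ring, show 1 - (γ + 2) = -γ - 1 by ring] at hmain
  have hfx := hf x hxS
  linarith
end

section
/- Let N ≥ 1, let Ω ⊂ ℝ^N be open, 0 < δ₀ < 1, and let v : Ω → ℝ be positive and twice continuously differentiable on S = {x ∈ Ω : 0 < v(x) < δ₀}, with |∇v(x)| = 1 and |Δv(x)| ≤ M on S for some M ≥ 0. Let q > 1 and set β = q − 2, assuming β ≥ 0 (the critical logarithmic regime q = β + 2). Assume h : [0,∞) → [0,∞) satisfies h(s) ≥ l₁·s^q for all s ≥ 0 with l₁ > 0; that b(x) ≥ b₁·v(x)^β on S with b₁ > 0; that a(x) ≥ 0 on S; and that f(x) ≤ F₀ on S for some constant F₀. Let C > 0 and define W(x) = C·ln(1/v(x)) on S. Then for every ε > 0 there exists δ ∈ (0, δ₀] such that v(x)²·(−ΔW(x) + b(x)·h(|∇W(x)|) + a(x)·W(x) − f(x)) ≥ b₁·l₁·C^q − C − ε for every x ∈ Ω with 0 < v(x) < δ. -/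
open Set

open Topology

section LogBarrier

variable {N : ℕ} {v : EuclideanSpace ℝ (Fin N) → ℝ} {x : EuclideanSpace ℝ (Fin N)} (C : ℝ)

theorem hasFDerivAt_const_mul_log_one_div (hd : DifferentiableAt ℝ v x) (hpos : 0 < v x) :
    HasFDerivAt (fun y => C * Real.log (1 / v y)) ((-C * (v x)⁻¹) • fderiv ℝ v x) x := by
  have h1 : HasFDerivAt (fun y => -C * Real.log (v y)) ((-C * (v x)⁻¹) • fderiv ℝ v x) x := by
    rw [mul_smul]
    exact (hd.hasFDerivAt.log hpos.ne').const_mul (-C)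
  convert h1 using 2 with y
  rw [one_div, Real.log_inv]
  ring

theorem norm_gradient_eq_norm_fderiv (u : EuclideanSpace ℝ (Fin N) → ℝ) :
    ‖gradient u x‖ = ‖fderiv ℝ u x‖ := by
  rw [gradient, LinearIsometryEquiv.norm_map]

theorem sum_fderiv_single_sq (u : EuclideanSpace ℝ (Fin N) → ℝ) :
    ∑ i, (fderiv ℝ u x (EuclideanSpace.single i 1)) ^ 2 = ‖gradient u x‖ ^ 2 := by
  rw [EuclideanSpace.norm_sq_eq]
  refine Finset.sum_congr rfl fun i _ => ?_
  have h : fderiv ℝ u x (EuclideanSpace.single i 1) = gradient u x i := by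
    rw [gradient, ← InnerProductSpace.toDual_symm_apply, EuclideanSpace.inner_single_right]
    simp
  rw [h, Real.norm_eq_abs, sq_abs]

theorem norm_gradient_const_mul_log_one_div (hC : 0 < C) (hd : DifferentiableAt ℝ v x)
    (hpos : 0 < v x) :
    ‖gradient (fun y => C * Real.log (1 / v y)) x‖ = C / v x * ‖gradient v x‖ := by
  rw [norm_gradient_eq_norm_fderiv, norm_gradient_eq_norm_fderiv,
    (hasFDerivAt_const_mul_log_one_div C hd hpos).fderiv, norm_smul, norm_mul, norm_neg, norm_inv,
    Real.norm_of_nonneg hC.le, Real.norm_of_nonneg hpos.le, div_eq_mul_inv]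

theorem laplacian_const_mul_log_one_div (hv : ContDiffAt ℝ 2 v x) (hpos : 0 < v x) :
    laplacian (fun y => C * Real.log (1 / v y)) x =
      C * (‖gradient v x‖ ^ 2 / v x ^ 2 - laplacian v x / v x) := by
  have hd : DifferentiableAt ℝ v x := hv.differentiableAt (by norm_num)
  have hnear : ∀ᶠ y in 𝓝 x, DifferentiableAt ℝ v y ∧ 0 < v y :=
    ((hv.eventually (by simp)).mono fun y hy => hy.differentiableAt (by norm_num)).and
      (hd.continuousAt.eventually_const_lt hpos)
  have hd' : DifferentiableAt ℝ (fderiv ℝ v) x :=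
    (hv.fderiv_right (m := 1) (by norm_num)).differentiableAt (by norm_num)
  rw [← sum_fderiv_single_sq, laplacian, laplacian, Finset.sum_div, Finset.sum_div,
    ← Finset.sum_sub_distrib, Finset.mul_sum]
  refine Finset.sum_congr rfl fun i _ => ?_
  set e : EuclideanSpace ℝ (Fin N) := EuclideanSpace.single i 1
  have heq : (fun y => fderiv ℝ (fun z => C * Real.log (1 / v z)) y e) =ᶠ[𝓝 x]
      fun y => (-C * (v y)⁻¹) * fderiv ℝ v y e := by
    filter_upwards [hnear] with y hy
    rw [(hasFDerivAt_const_mul_log_one_div C hy.1 hy.2).fderiv]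
    rfl
  have hde : DifferentiableAt ℝ (fun y => fderiv ℝ v y e) x := hd'.clm_apply (by fun_prop)
  have hinv : HasFDerivAt (fun y => -C * (v y)⁻¹) (-C • (-(v x ^ 2)⁻¹ • fderiv ℝ v x)) x :=
    ((hasDerivAt_inv hpos.ne').comp_hasFDerivAt x hd.hasFDerivAt).const_mul (-C)
  rw [heq.fderiv_eq, (hinv.fun_mul hde.hasFDerivAt).fderiv]
  simp only [add_apply, smul_apply, smul_eq_mul]
  field_simp
  ring

end LogBarrier

theorem isOpen_collar {N : ℕ} {Ω : Set (EuclideanSpace ℝ (Fin N))} (hΩ : IsOpen Ω)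
    {v : EuclideanSpace ℝ (Fin N) → ℝ} {δ₀ : ℝ}
    (hd : ∀ x ∈ {x ∈ Ω | 0 < v x ∧ v x < δ₀}, DifferentiableAt ℝ v x) :
    IsOpen {x ∈ Ω | 0 < v x ∧ v x < δ₀} := by
  rw [isOpen_iff_mem_nhds]
  intro x hx
  have hc := (hd x hx).continuousAt
  filter_upwards [hΩ.mem_nhds hx.1, hc.eventually_const_lt hx.2.1, hc.eventually_lt_const hx.2.2]
    with y h1 h2 h3 using ⟨h1, h2, h3⟩

/-- critical logarithmic regime `q = β + 2` (i.e. `β = q − 2 ≥ 0`).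
For `W = C·ln(1/v)` with `C > 0`, under `h(s) ≥ l₁·s^q`, `b ≥ b₁·v^β`, `a ≥ 0`,
`f ≤ F₀` on the collar `S = {x ∈ Ω : 0 < v(x) < δ₀}` (with `0 < δ₀ < 1`, `|∇v| = 1`,
`|Δv| ≤ M`), for every `ε > 0` there is `δ ∈ (0, δ₀]` such that
`v² · (−ΔW + b·h(|∇W|) + a·W − f) ≥ b₁·l₁·C^q − C − ε` on `{0 < v < δ}`. -/
theorem critical_logarithmic_barrier {N : ℕ} (hN : 1 ≤ N)
    (Ω : Set (EuclideanSpace ℝ (Fin N))) (hΩ : IsOpen Ω)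
    (δ₀ : ℝ) (hδ₀ : 0 < δ₀) (hδ₀1 : δ₀ < 1)
    (v : EuclideanSpace ℝ (Fin N) → ℝ) (M : ℝ) (hM : 0 ≤ M)
    (hv : ContDiffOn ℝ 2 v {x ∈ Ω | 0 < v x ∧ v x < δ₀})
    (hgrad : ∀ x ∈ {x ∈ Ω | 0 < v x ∧ v x < δ₀}, ‖gradient v x‖ = 1)
    (hlap : ∀ x ∈ {x ∈ Ω | 0 < v x ∧ v x < δ₀}, |laplacian v x| ≤ M)
    (q β : ℝ) (hq : 1 < q) (hβdef : β = q - 2) (hβ : 0 ≤ β)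
    (h : ℝ → ℝ) (l₁ : ℝ) (hl₁ : 0 < l₁)
    (hhnn : ∀ s : ℝ, 0 ≤ s → 0 ≤ h s)
    (hh : ∀ s : ℝ, 0 ≤ s → l₁ * s ^ q ≤ h s)
    (a b f : EuclideanSpace ℝ (Fin N) → ℝ) (b₁ : ℝ) (hb₁ : 0 < b₁)
    (hbv : ∀ x ∈ {x ∈ Ω | 0 < v x ∧ v x < δ₀}, b₁ * v x ^ β ≤ b x)
    (ha : ∀ x ∈ {x ∈ Ω | 0 < v x ∧ v x < δ₀}, 0 ≤ a x)
    (F₀ : ℝ) (hf : ∀ x ∈ {x ∈ Ω | 0 < v x ∧ v x < δ₀}, f x ≤ F₀)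
    (C : ℝ) (hC : 0 < C) :
    ∀ ε : ℝ, 0 < ε →
      ∃ δ : ℝ, 0 < δ ∧ δ ≤ δ₀ ∧ ∀ x ∈ Ω, 0 < v x → v x < δ →
        b₁ * l₁ * C ^ q - C - ε ≤
          v x ^ 2 * (-laplacian (fun y => C * Real.log (1 / v y)) x
            + b x * h ‖gradient (fun y => C * Real.log (1 / v y)) x‖
            + a x * (C * Real.log (1 / v x)) - f x) := by
  intro ε hε
  have hK : 0 < C * M + |F₀| + 1 := by positivity
  have hdiff : ∀ x ∈ {x ∈ Ω | 0 < v x ∧ v x < δ₀}, DifferentiableAt ℝ v x := by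
    intro x hx
    by_contra hnd
    have h1 := hgrad x hx
    rw [norm_gradient_eq_norm_fderiv, fderiv_zero_of_not_differentiableAt hnd] at h1
    simp at h1
  have hopen := isOpen_collar hΩ hdiff
  refine ⟨min δ₀ (ε / (C * M + |F₀| + 1)), by positivity, min_le_left _ _, ?_⟩
  intro x hxΩ hpos hlt
  have hxδ₀ := hlt.trans_le (min_le_left _ _)
  have hx : x ∈ {x ∈ Ω | 0 < v x ∧ v x < δ₀} := ⟨hxΩ, hpos, hxδ₀⟩
  have hsmall : v x * (C * M + |F₀| + 1) < ε :=
    (lt_div_iff₀ hK).mp (hlt.trans_le (min_le_right _ _))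
  have hlapW := laplacian_const_mul_log_one_div C (hv.contDiffAt (hopen.mem_nhds hx)) hpos
  have hgradW := norm_gradient_const_mul_log_one_div C hC (hdiff x hx) hpos
  rw [hgrad x hx] at hlapW hgradW
  rw [hlapW, hgradW, mul_one]
  have hdiffusion : v x ^ 2 * -(C * (1 ^ 2 / v x ^ 2 - laplacian v x / v x)) =
      C * (v x * laplacian v x) - C := by
    field_simp
    ring
  have hΔ : -(v x * M) ≤ v x * laplacian v x := by
    have := mul_le_mul_of_nonneg_left (abs_le.mp (hlap x hx)).1 hpos.le
    linarith
  have habsorption : b₁ * l₁ * C ^ q ≤ v x ^ 2 * (b x * h (C / v x)) := by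
    have hpow : v x ^ 2 * (v x ^ β * (C / v x) ^ q) = C ^ q := by
      rw [Real.div_rpow hC.le hpos.le, hβdef, Real.rpow_sub hpos, Real.rpow_two]
      have := Real.rpow_pos_of_pos hpos q
      field_simp
    calc b₁ * l₁ * C ^ q = v x ^ 2 * (b₁ * v x ^ β * (l₁ * (C / v x) ^ q)) := by
          rw [← hpow]; ring
      _ ≤ v x ^ 2 * (b x * h (C / v x)) := by
          have hs : 0 ≤ C / v x := by positivity
          have hb : 0 ≤ b x := le_trans (by positivity) (hbv x hx)
          gcongr
          · exact hbv x hx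
          · exact hh _ hs
  have hzero : 0 ≤ v x ^ 2 * (a x * (C * Real.log (1 / v x))) := by
    have hlog : 0 ≤ Real.log (1 / v x) :=
      Real.log_nonneg ((one_le_div hpos).mpr (hxδ₀.trans hδ₀1).le)
    have := ha x hx
    positivity
  have hsource : v x ^ 2 * f x ≤ v x * |F₀| := by
    have hvv : v x ^ 2 ≤ v x := by nlinarith
    calc v x ^ 2 * f x ≤ v x ^ 2 * |F₀| := by
          gcongr
          exact (hf x hx).trans (le_abs_self _)
      _ ≤ v x * |F₀| := by gcongr
  have hCΔ := mul_le_mul_of_nonneg_left hΔ hC.le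
  linarith
end
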